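/- Suppose the i.i.d. source/side-information process satisfies that (S1, W2) is independent of (S2, W1), and suppose the strong source-channel interference conditions hold for source-channel rate b, namely b·I(X1;Y1|X2) ≤ b·I(X1;Y2|X2) + I(S1;W2) and b·I(X2;Y2|X1) ≤ b·I(X2;Y1|X1) + I(S2;W1) for all single-letter distributions of the form p(w1,w2,s1,s2)·p(x1|s1)·p(x2|s2) with (Y1, Y2) obtained through the channel p(y1,y2|x1,x2). Then for all block lengths m, n with n/m = b and all encoders X1^n = f1(S1^m), X2^n = f2(S2^m), the n-letter inequalities hold: I(X2^n; Y2^n | X1^n) ≤ I(X2^n; Y1^n | X1^n) + I(S2^m; W1^m) and I(X1^n; Y1^n | X2^n) ≤ I(X1^n; Y2^n | X2^n) + I(S1^m; W2^m). -/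

import Mathlib

open scoped BigOperators Classical

noncomputable section

/-- Probability that the random variable `X` equals `a`, under the pmf `μ`
on the finite sample space `Ω`. -/
def prD {Ω α : Type} [Fintype Ω] (μ : Ω → ℝ) (X : Ω → α) (a : α) : ℝ :=
  ∑ ω, if X ω = a then μ ω else 0

/-- Shannon entropy (in nats) of the random variable `X` under the pmf `μ`. -/
def ent {Ω α : Type} [Fintype Ω] [Fintype α] (μ : Ω → ℝ) (X : Ω → α) : ℝ :=
  -∑ a, prD μ X a * Real.log (prD μ X a)

/-- Conditional entropy `H(X | Y)` under the pmf `μ`. -/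
def condEnt {Ω α β : Type} [Fintype Ω] [Fintype α] [Fintype β]
    (μ : Ω → ℝ) (X : Ω → α) (Y : Ω → β) : ℝ :=
  ent μ (fun ω => (X ω, Y ω)) - ent μ Y

/-- Mutual information `I(X ; Y)` under the pmf `μ`. -/
def mutInf {Ω α β : Type} [Fintype Ω] [Fintype α] [Fintype β]
    (μ : Ω → ℝ) (X : Ω → α) (Y : Ω → β) : ℝ :=
  ent μ X + ent μ Y - ent μ (fun ω => (X ω, Y ω))

/-- Conditional mutual information `I(X ; Y | Z)` under the pmf `μ`. -/
def condMutInf {Ω α β γ : Type} [Fintype Ω] [Fintype α] [Fintype β] [Fintype γ]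
    (μ : Ω → ℝ) (X : Ω → α) (Y : Ω → β) (Z : Ω → γ) : ℝ :=
  condEnt μ X Z - condEnt μ X (fun ω => (Y ω, Z ω))

/-- `p` is a probability mass function on the finite type `α`. -/
def IsPmf {α : Type} [Fintype α] (p : α → ℝ) : Prop :=
  (∀ a, 0 ≤ p a) ∧ ∑ a, p a = 1


/-- The single-letter joint distribution
`p(s1,s2,w1,w2) p(x1|s1) p(x2|s2) p(y1,y2|x1,x2)`. -/
def sciMeasure {S1 S2 W1 W2 X1 X2 Y1 Y2 : Type}
    (pS : S1 × S2 × W1 × W2 → ℝ) (k1 : S1 → X1 → ℝ) (k2 : S2 → X2 → ℝ)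
    (chan : X1 → X2 → Y1 × Y2 → ℝ) :
    (S1 × S2 × W1 × W2) × X1 × X2 × (Y1 × Y2) → ℝ :=
  fun z => pS z.1 * k1 z.1.1 z.2.1 * k2 z.1.2.1 z.2.2.1 * chan z.2.1 z.2.2.1 z.2.2.2

/-- The distribution of the source blocks `(S1,S2,W1,W2)^m` (i.i.d. `pS`) together
with the channel output blocks `(Y1,Y2)^n` produced from the deterministic channel
inputs `X1^n = f1(S1^m)`, `X2^n = f2(S2^m)` through `n` memoryless uses of `chan`. -/
def icBlockMeasure {S1 S2 W1 W2 X1 X2 Y1 Y2 : Type}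
    (pS : S1 × S2 × W1 × W2 → ℝ) (chan : X1 → X2 → Y1 × Y2 → ℝ) (m n : ℕ)
    (f1 : (Fin m → S1) → Fin n → X1) (f2 : (Fin m → S2) → Fin n → X2) :
    (Fin m → S1 × S2 × W1 × W2) × (Fin n → Y1 × Y2) → ℝ :=
  fun ω => (∏ i, pS (ω.1 i)) *
    ∏ j, chan (f1 (fun i => (ω.1 i).1) j) (f2 (fun i => (ω.1 i).2.1) j) (ω.2 j)

set_option linter.unusedSectionVars false

/-- Entropy functional `∑ -p log p` of a real-valued function on a finite type. -/
def shannon {α : Type} [Fintype α] (p : α → ℝ) : ℝ := ∑ a, Real.negMulLog (p a)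

/-- Output measure of the channel `V` for the input measure `q`. -/
def output {X Y : Type} [Fintype X] (q : X → ℝ) (V : X → Y → ℝ) (y : Y) : ℝ :=
  ∑ x, q x * V x y

/-- For every finite input measure `q`, the output entropy of `W` exceeds the output entropy of
`V` by at most the `q`-integral of `d`. -/
def EntropyGapLE {X Y Y' : Type} [Fintype X] [Fintype Y] [Fintype Y']
    (V : X → Y → ℝ) (W : X → Y' → ℝ) (d : X → ℝ) : Prop :=
  ∀ q : X → ℝ, (∀ x, 0 ≤ q x) →
    shannon (output q W) - shannon (output q V) ≤ ∑ x, q x * d x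

section Shannon

variable {α β : Type} [Fintype α] [Fintype β]

lemma shannon_comp_equiv (e : β ≃ α) (p : α → ℝ) : shannon (fun b => p (e b)) = shannon p :=
  Equiv.sum_comp e fun a => Real.negMulLog (p a)

lemma shannon_const_mul (t : ℝ) (p : α → ℝ) :
    shannon (fun a => t * p a) = (∑ a, p a) * Real.negMulLog t + t * shannon p := by
  simp only [shannon, Real.negMulLog_mul, Finset.sum_add_distrib, Finset.sum_mul, Finset.mul_sum]

lemma shannon_prod_type (p : α × β → ℝ) : shannon p = ∑ a, shannon fun b => p (a, b) :=
  Fintype.sum_prod_type _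

lemma shannon_prod_type_right (p : α × β → ℝ) : shannon p = ∑ b, shannon fun a => p (a, b) :=
  Fintype.sum_prod_type_right _

lemma shannon_mul {p : α → ℝ} {q : β → ℝ} (hp : ∑ a, p a = 1) (hq : ∑ b, q b = 1) :
    shannon (fun z : α × β => p z.1 * q z.2) = shannon p + shannon q := by
  rw [shannon_prod_type]
  simp only [shannon_const_mul, hq, one_mul, Finset.sum_add_distrib, ← Finset.sum_mul, hp]
  rfl

lemma sum_prod_apply (n : ℕ) (p : Fin n → α → ℝ) (hp : ∀ j, ∑ a, p j a = 1) :
    ∑ a : Fin n → α, ∏ j, p j (a j) = 1 := by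
  rw [← Fintype.prod_sum]
  simp [hp]

lemma shannon_pi (n : ℕ) (p : Fin n → α → ℝ) (hp : ∀ j, ∑ a, p j a = 1) :
    shannon (fun a : Fin n → α => ∏ j, p j (a j)) = ∑ j, shannon (p j) := by
  induction n with
  | zero => simp [shannon]
  | succ n ih =>
    rw [← shannon_comp_equiv (Fin.consEquiv fun _ => α), Fin.sum_univ_succ,
      ← ih (fun j => p j.succ) fun j => hp _,
      ← shannon_mul (hp 0) (sum_prod_apply n _ fun j => hp j.succ)]
    congr 1
    ext z
    simp [Fin.consEquiv, Fin.prod_univ_succ]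

end Shannon

section Gap

variable {X Y Y' A B B' : Type} [Fintype X] [Fintype Y] [Fintype Y'] [Fintype A] [Fintype B]
  [Fintype B']

lemma sum_output (q : X → ℝ) {V : X → Y → ℝ} (hV : ∀ x, ∑ y, V x y = 1) :
    ∑ y, output q V y = ∑ x, q x := by
  simp only [output]
  rw [Finset.sum_comm]
  simp [← Finset.mul_sum, hV]

lemma EntropyGapLE.of_isPmf {V : X → Y → ℝ} {W : X → Y' → ℝ} {d : X → ℝ}
    (hV : ∀ x, ∑ y, V x y = 1) (hW : ∀ x, ∑ y, W x y = 1)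
    (h : ∀ q : X → ℝ, IsPmf q →
      shannon (output q W) - shannon (output q V) ≤ ∑ x, q x * d x) :
    EntropyGapLE V W d := by
  intro q hq
  rcases (Finset.sum_nonneg fun x (_ : x ∈ Finset.univ) => hq x).eq_or_lt with h0 | ht
  · have hq0 : ∀ x, q x = 0 := fun x =>
      (Finset.sum_eq_zero_iff_of_nonneg fun x _ => hq x).1 h0.symm x (Finset.mem_univ x)
    simp [shannon, output, hq0]
  · set t := ∑ x, q x with htdef
    have hsum : ∑ x, q x / t = 1 := by rw [← Finset.sum_div, ← htdef, div_self ht.ne']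
    have hdec : ∀ {Z : Type} [Fintype Z] (U : X → Z → ℝ), (∀ x, ∑ z, U x z = 1) →
        shannon (output q U) =
          Real.negMulLog t + t * shannon (output (fun x => q x / t) U) := by
      intro Z _ U hU
      have : output q U = fun z => t * output (fun x => q x / t) U z := by
        ext z
        simp only [output, Finset.mul_sum]
        refine Finset.sum_congr rfl fun x _ => ?_
        field_simp
      rw [this, shannon_const_mul, sum_output _ hU, hsum, one_mul]
    have key := h (fun x => q x / t) ⟨fun x => div_nonneg (hq x) ht.le, hsum⟩
    have hd : ∑ x, q x * d x = t * ∑ x, q x / t * d x := by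
      rw [Finset.mul_sum]
      refine Finset.sum_congr rfl fun x _ => ?_
      field_simp
    rw [hdec V hV, hdec W hW, hd]
    linarith [mul_le_mul_of_nonneg_left key ht.le]

lemma EntropyGapLE.prod {V : X → Y → ℝ} {V' : X → Y' → ℝ} {d : X → ℝ}
    {W : A → B → ℝ} {W' : A → B' → ℝ} {e : A → ℝ}
    (h : EntropyGapLE V V' d) (h' : EntropyGapLE W W' e)
    (hV : ∀ x, IsPmf (V x)) (hW' : ∀ a, IsPmf (W' a)) :
    EntropyGapLE (fun (z : X × A) (y : Y × B) => V z.1 y.1 * W z.2 y.2)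
      (fun z (y : Y' × B') => V' z.1 y.1 * W' z.2 y.2) (fun z => d z.1 + e z.2) := by
  intro q hq
  have h1 : ∀ b, _ := fun b => h (fun x => ∑ a, q (x, a) * W' a b) fun x =>
    Finset.sum_nonneg fun a _ => mul_nonneg (hq _) ((hW' a).1 b)
  have h2 : ∀ y, _ := fun y => h' (fun a => ∑ x, q (x, a) * V x y) fun a =>
    Finset.sum_nonneg fun x _ => mul_nonneg (hq _) ((hV x).1 y)
  have s1 := Finset.sum_le_sum fun b (_ : b ∈ Finset.univ) => h1 b
  have s2 := Finset.sum_le_sum fun y (_ : y ∈ Finset.univ) => h2 y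
  have hd : ∑ b, ∑ x, (∑ a, q (x, a) * W' a b) * d x = ∑ z : X × A, q z * d z.1 := by
    rw [Finset.sum_comm, Fintype.sum_prod_type]
    refine Finset.sum_congr rfl fun x _ => ?_
    rw [← Finset.sum_mul, Finset.sum_comm, Finset.sum_mul]
    simp [← Finset.mul_sum, (hW' _).2]
  have he : ∑ y, ∑ a, (∑ x, q (x, a) * V x y) * e a = ∑ z : X × A, q z * e z.2 := by
    rw [Finset.sum_comm, Fintype.sum_prod_type_right]
    refine Finset.sum_congr rfl fun a _ => ?_
    rw [← Finset.sum_mul, Finset.sum_comm, Finset.sum_mul]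
    simp [← Finset.mul_sum, (hV _).2]
  have o1 : ∀ {Z Z' : Type} [Fintype Z] [Fintype Z'] (F : X → Z → ℝ) (G : A → Z' → ℝ) (b : Z'),
      output (fun x => ∑ a, q (x, a) * G a b) F =
        fun y => output q (fun z (y : Z × Z') => F z.1 y.1 * G z.2 y.2) (y, b) := by
    intro Z Z' _ _ F G b
    ext y
    simp only [output, Fintype.sum_prod_type, Finset.sum_mul]
    exact Finset.sum_congr rfl fun x _ => Finset.sum_congr rfl fun a _ => by ring
  have o2 : ∀ {Z Z' : Type} [Fintype Z] [Fintype Z'] (F : X → Z → ℝ) (G : A → Z' → ℝ) (y : Z),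
      output (fun a => ∑ x, q (x, a) * F x y) G =
        fun b => output q (fun z (y : Z × Z') => F z.1 y.1 * G z.2 y.2) (y, b) := by
    intro Z Z' _ _ F G y
    ext b
    simp only [output, Fintype.sum_prod_type_right, Finset.sum_mul]
    exact Finset.sum_congr rfl fun x _ => Finset.sum_congr rfl fun a _ => by ring
  simp only [o1, Finset.sum_sub_distrib, ← shannon_prod_type_right, hd] at s1
  simp only [o2, Finset.sum_sub_distrib, ← shannon_prod_type, he] at s2
  simp only [mul_add, Finset.sum_add_distrib]
  linarith

lemma EntropyGapLE.congr_equiv {V : X → Y → ℝ} {W : X → Y' → ℝ} {d : X → ℝ}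
    (i : X ≃ A) (j : Y ≃ B) (k : Y' ≃ B') {V₁ : A → B → ℝ} {W₁ : A → B' → ℝ} {d₁ : A → ℝ}
    (h : EntropyGapLE V W d) (hV : ∀ x y, V₁ (i x) (j y) = V x y)
    (hW : ∀ x y, W₁ (i x) (k y) = W x y) (hd : ∀ x, d₁ (i x) = d x) :
    EntropyGapLE V₁ W₁ d₁ := by
  intro q hq
  have key := h (fun x => q (i x)) fun x => hq _
  have e1 : output (fun x => q (i x)) V = fun y => output q V₁ (j y) := by
    ext y
    simp only [output, ← hV]
    exact Equiv.sum_comp i fun a => q a * V₁ a (j y)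
  have e2 : output (fun x => q (i x)) W = fun y => output q W₁ (k y) := by
    ext y
    simp only [output, ← hW]
    exact Equiv.sum_comp i fun a => q a * W₁ a (k y)
  simp only [e1, e2, shannon_comp_equiv, ← hd] at key
  rwa [Equiv.sum_comp i fun a => q a * d₁ a] at key

lemma IsPmf.pi {n : ℕ} {p : Fin n → X → ℝ} (hp : ∀ j, IsPmf (p j)) :
    IsPmf fun a : Fin n → X => ∏ j, p j (a j) :=
  ⟨fun _ => Finset.prod_nonneg fun j _ => (hp j).1 _, sum_prod_apply n p fun j => (hp j).2⟩

lemma EntropyGapLE.pi {n : ℕ} {V : Fin n → X → Y → ℝ} {W : Fin n → X → Y' → ℝ}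
    {d : Fin n → X → ℝ} (h : ∀ j, EntropyGapLE (V j) (W j) (d j))
    (hV : ∀ j x, IsPmf (V j x)) (hW : ∀ j x, IsPmf (W j x)) :
    EntropyGapLE (fun (x : Fin n → X) (y : Fin n → Y) => ∏ j, V j (x j) (y j))
      (fun x (y : Fin n → Y') => ∏ j, W j (x j) (y j)) (fun x => ∑ j, d j (x j)) := by
  induction n with
  | zero =>
    intro q _
    simp [shannon, output]
  | succ n ih =>
    refine ((h 0).prod (ih (fun j => h j.succ) (fun j => hV _) fun j => hW _) (hV 0)
      fun x => IsPmf.pi fun j => hW j.succ (x j)).congr_equiv (Fin.consEquiv fun _ => X)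
      (Fin.consEquiv fun _ => Y) (Fin.consEquiv fun _ => Y') ?_ ?_ ?_
    · intro x y; simp [Fin.consEquiv, Fin.prod_univ_succ]
    · intro x y; simp [Fin.consEquiv, Fin.prod_univ_succ]
    · intro x; simp [Fin.consEquiv, Fin.sum_univ_succ]

end Gap

section Law

variable {Ω X Y Z : Type} [Fintype Ω] [Fintype X] [Fintype Y] [Fintype Z]

lemma ent_eq_shannon (μ : Ω → ℝ) (U : Ω → X) : ent μ U = shannon (prD μ U) := by
  simp [ent, shannon, Real.negMulLog]

lemma prD_nonneg {μ : Ω → ℝ} (hμ : ∀ ω, 0 ≤ μ ω) (U : Ω → X) (a : X) : 0 ≤ prD μ U a :=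
  Finset.sum_nonneg fun ω _ => by split_ifs <;> simp [hμ]

lemma sum_prD (μ : Ω → ℝ) (U : Ω → X) : ∑ a, prD μ U a = ∑ ω, μ ω := by
  simp only [prD]
  rw [Finset.sum_comm]
  simp

lemma sum_prD_pair (μ : Ω → ℝ) (U : Ω → X) (T : Ω → Y) (t : Y) :
    ∑ a, prD μ (fun ω => (U ω, T ω)) (a, t) = prD μ T t := by
  simp only [prD]
  rw [Finset.sum_comm]
  refine Finset.sum_congr rfl fun ω _ => ?_
  by_cases h : T ω = t <;> simp [h]

lemma condMutInf_of_law (μ : Ω → ℝ) (U : Ω → X) (T : Ω → Y) (R : Ω → Z) (p : X → Z → ℝ)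
    (V : Z → X → Y → ℝ) (hV : ∀ z x, ∑ y, V z x y = 1)
    (hp : ∀ x z, prD μ (fun ω => (U ω, R ω)) (x, z) = p x z)
    (hlaw : ∀ x y z, prD μ (fun ω => (U ω, T ω, R ω)) (x, y, z) = p x z * V z x y) :
    condMutInf μ U T R =
      ∑ z, (shannon (output (fun x => p x z) (V z)) - ∑ x, p x z * shannon (V z x)) -
        ent μ R := by
  have h3 : ent μ (fun ω => (U ω, T ω, R ω)) =
      ent μ (fun ω => (U ω, R ω)) + ∑ z, ∑ x, p x z * shannon (V z x) := by
    simp only [ent_eq_shannon]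
    rw [shannon_prod_type, shannon_prod_type, Finset.sum_comm, ← Finset.sum_add_distrib]
    refine Finset.sum_congr rfl fun x _ => ?_
    rw [shannon_prod_type_right]
    simp only [hlaw, hp, shannon_const_mul, hV, one_mul, Finset.sum_add_distrib]
    rfl
  have h2 : ent μ (fun ω => (T ω, R ω)) = ∑ z, shannon (output (fun x => p x z) (V z)) := by
    rw [ent_eq_shannon, shannon_prod_type_right]
    refine Finset.sum_congr rfl fun z _ => congrArg shannon ?_
    ext y
    rw [← sum_prD_pair μ U fun ω => (T ω, R ω)]
    simp only [hlaw, output]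
  rw [condMutInf, condEnt, condEnt, h3, h2, Finset.sum_sub_distrib]
  ring

lemma prD_congr (μ : Ω → ℝ) {U : Ω → X} {T : Ω → Y} {a : X} {b : Y}
    (h : ∀ ω, U ω = a ↔ T ω = b) : prD μ U a = prD μ T b := by
  simp only [prD, h]

lemma condMutInf_of_law_const (μ : Ω → ℝ) (U : Ω → X) (T : Ω → Y) (R : Ω → Z) (q : X → ℝ)
    (V : Z → X → Y → ℝ) (z₀ : Z) (hV : ∀ z x, ∑ y, V z x y = 1)
    (hlaw : ∀ x y z, prD μ (fun ω => (U ω, T ω, R ω)) (x, y, z) =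
      q x * (if z = z₀ then 1 else 0) * V z x y) :
    condMutInf μ U T R =
      shannon (output q (V z₀)) - ∑ x, q x * shannon (V z₀ x) - ent μ R := by
  rw [condMutInf_of_law μ U T R (fun x z => q x * if z = z₀ then 1 else 0) V hV _ hlaw,
    Finset.sum_eq_single z₀]
  · simp
  · intro z _ hz
    simp [hz, shannon, output]
  · simp
  · intro x z
    have hswap : ∀ y, prD μ (fun ω => (T ω, U ω, R ω)) (y, x, z) =
        q x * (if z = z₀ then 1 else 0) * V z x y := by
      intro y
      rw [← hlaw]
      refine prD_congr μ fun ω => ?_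
      simp only [Prod.mk.injEq]
      tauto
    rw [← sum_prD_pair μ T fun ω => (U ω, R ω)]
    simp only [hswap, ← Finset.mul_sum, hV, mul_one]

lemma condMutInf_le_add_of_entropyGapLE {Y' : Type} [Fintype Y'] {μ : Ω → ℝ} (hμ : IsPmf μ)
    (U : Ω → X) (T : Ω → Y) (T' : Ω → Y') (R : Ω → Z)
    {V : Z → X → Y → ℝ} {V' : Z → X → Y' → ℝ} {c : ℝ}
    (hV : ∀ z x, ∑ y, V z x y = 1) (hV' : ∀ z x, ∑ y, V' z x y = 1)
    (hlaw : ∀ x y z, prD μ (fun ω => (U ω, T ω, R ω)) (x, y, z) =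
      prD μ (fun ω => (U ω, R ω)) (x, z) * V z x y)
    (hlaw' : ∀ x y z, prD μ (fun ω => (U ω, T' ω, R ω)) (x, y, z) =
      prD μ (fun ω => (U ω, R ω)) (x, z) * V' z x y)
    (hgap : ∀ z, EntropyGapLE (V z) (V' z) fun x => c + shannon (V' z x) - shannon (V z x)) :
    condMutInf μ U T' R ≤ condMutInf μ U T R + c := by
  rw [condMutInf_of_law μ U T R _ V hV (fun _ _ => rfl) hlaw,
    condMutInf_of_law μ U T' R _ V' hV' (fun _ _ => rfl) hlaw']
  have key := Finset.sum_le_sum fun z (_ : z ∈ Finset.univ) =>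
    hgap z (fun x => prD μ (fun ω => (U ω, R ω)) (x, z)) fun x => prD_nonneg hμ.1 _ _
  have hc : ∑ z, ∑ x, prD μ (fun ω => (U ω, R ω)) (x, z) * c = c := by
    simp only [← Finset.sum_mul]
    rw [← Fintype.sum_prod_type_right, sum_prD, hμ.2, one_mul]
  simp only [mul_add, mul_sub, Finset.sum_add_distrib, Finset.sum_sub_distrib, hc] at key ⊢
  linarith

lemma prD_map (μ : Ω → ℝ) (U : Ω → X) (h : X → Y) (y : Y) :
    prD (prD μ U) h y = prD μ (fun ω => h (U ω)) y := by
  simp only [prD]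
  calc _ = ∑ x, ∑ ω, if U ω = x then (if h x = y then μ ω else 0) else 0 := by
        refine Finset.sum_congr rfl fun x _ => ?_
        split_ifs <;> simp
    _ = _ := by
        rw [Finset.sum_comm]
        simp

lemma IsPmf.map {μ : Ω → ℝ} (hμ : IsPmf μ) (U : Ω → X) : IsPmf (prD μ U) :=
  ⟨prD_nonneg hμ.1 U, (sum_prD μ U).trans hμ.2⟩

lemma prD_pi (n : ℕ) (p : Fin n → Ω → ℝ) (U : Ω → X) (a : Fin n → X) :
    prD (fun t : Fin n → Ω => ∏ j, p j (t j)) (fun t j => U (t j)) a =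
      ∏ j, prD (p j) U (a j) := by
  simp only [prD]
  rw [Fintype.prod_sum]
  refine Finset.sum_congr rfl fun t _ => ?_
  rw [Finset.prod_ite_zero]
  simp [funext_iff]

lemma ent_pi (n : ℕ) {μ : Ω → ℝ} (hμ : IsPmf μ) (U : Ω → X) :
    ent (fun t : Fin n → Ω => ∏ j, μ (t j)) (fun t j => U (t j)) = n * ent μ U := by
  rw [ent_eq_shannon, ent_eq_shannon]
  have : prD (fun t : Fin n → Ω => ∏ j, μ (t j)) (fun t j => U (t j)) =
      fun a => ∏ j, prD μ U (a j) := funext (prD_pi n (fun _ => μ) U)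
  rw [this, shannon_pi n (fun _ => prD μ U) fun _ => (hμ.map U).2]
  simp

lemma ent_comp_equiv (μ : Ω → ℝ) (U : Ω → X) (e : X ≃ Y) :
    ent μ (fun ω => e (U ω)) = ent μ U := by
  rw [ent_eq_shannon, ent_eq_shannon, ← shannon_comp_equiv e]
  congr 1
  ext x
  exact prD_congr μ fun ω => e.apply_eq_iff_eq

lemma mutInf_pi (n : ℕ) {μ : Ω → ℝ} (hμ : IsPmf μ) (U : Ω → X) (T : Ω → Y) :
    mutInf (fun t : Fin n → Ω => ∏ j, μ (t j)) (fun t j => U (t j)) (fun t j => T (t j)) =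
      n * mutInf μ U T := by
  have := ent_comp_equiv (fun t : Fin n → Ω => ∏ j, μ (t j)) (fun t j => (U (t j), T (t j)))
    (Equiv.arrowProdEquivProdArrow (Fin n) (fun _ => X) fun _ => Y)
  rw [ent_pi n hμ fun ω => (U ω, T ω)] at this
  rw [mutInf, mutInf, ent_pi n hμ, ent_pi n hμ, mul_sub, mul_add, ← this]
  rfl

lemma mutInf_map (μ : Ω → ℝ) (F : Ω → X) {A B : Type} [Fintype A] [Fintype B]
    (U : X → A) (T : X → B) :
    mutInf μ (fun ω => U (F ω)) (fun ω => T (F ω)) = mutInf (prD μ F) U T := by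
  simp only [mutInf, ent_eq_shannon, shannon, prD_map]

end Law

section Channel

variable {S Θ X Y Z : Type} [Fintype S] [Fintype Θ] [Fintype X] [Fintype Y] [Fintype Z]

/-- The joint law of a source with pmf `P` and the outputs of `n` uses of the channel `K` with
input blocks `f s` and `g s`. -/
def codedMeasure {n : ℕ} (P : S → ℝ) (K : Z → X → Θ → ℝ) (f : S → Fin n → X)
    (g : S → Fin n → Z) : S × (Fin n → Θ) → ℝ :=
  fun ω => P ω.1 * ∏ j, K (g ω.1 j) (f ω.1 j) (ω.2 j)

variable {n : ℕ} {P : S → ℝ} {K : Z → X → Θ → ℝ}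

lemma prD_codedMeasure_fst (hK : ∀ z x, IsPmf (K z x)) (f : S → Fin n → X)
    (g : S → Fin n → Z) : prD (codedMeasure P K f g) Prod.fst = P := by
  ext s
  simp only [prD, codedMeasure]
  rw [Fintype.sum_prod_type, Finset.sum_eq_single s]
  · simp only [if_true, ← Finset.mul_sum]
    rw [sum_prod_apply n (fun j => K (g s j) (f s j)) fun j => (hK _ _).2, mul_one]
  · intro s' _ hs
    simp [hs]
  · simp

lemma mutInf_codedMeasure (hK : ∀ z x, IsPmf (K z x)) (f : S → Fin n → X)
    (g : S → Fin n → Z) {A B : Type} [Fintype A] [Fintype B] (U : S → A) (T : S → B) :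
    mutInf (codedMeasure P K f g) (fun ω => U ω.1) (fun ω => T ω.1) = mutInf P U T := by
  rw [mutInf_map _ Prod.fst, prD_codedMeasure_fst hK]

lemma isPmf_codedMeasure (hP : IsPmf P) (hK : ∀ z x, IsPmf (K z x)) (f : S → Fin n → X)
    (g : S → Fin n → Z) : IsPmf (codedMeasure P K f g) := by
  refine ⟨fun ω => mul_nonneg (hP.1 _) (Finset.prod_nonneg fun j _ => (hK _ _).1 _), ?_⟩
  rw [← sum_prD _ Prod.fst, prD_codedMeasure_fst hK, hP.2]

lemma prD_codedMeasure_output (hK : ∀ z x, IsPmf (K z x)) (f : S → Fin n → X)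
    (g : S → Fin n → Z) (π : Θ → Y) (x : Fin n → X) (y : Fin n → Y) (z : Fin n → Z) :
    prD (codedMeasure P K f g) (fun ω => (f ω.1, (fun j => π (ω.2 j)), g ω.1)) (x, y, z) =
      prD (codedMeasure P K f g) (fun ω => (f ω.1, g ω.1)) (x, z) *
        ∏ j, prD (K (z j) (x j)) π (y j) := by
  rw [← prD_map (codedMeasure P K f g) Prod.fst fun s => (f s, g s), prD_codedMeasure_fst hK,
    ← prD_pi n (fun j => K (z j) (x j)) π y]
  simp only [prD, codedMeasure]
  rw [Fintype.sum_prod_type, Finset.sum_mul_sum]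
  refine Finset.sum_congr rfl fun s _ => Finset.sum_congr rfl fun t _ => ?_
  by_cases hx : f s = x
  · by_cases hz : g s = z
    · subst hx hz
      simp
    · simp [hz]
  · simp [hx]

lemma condMutInf_codedMeasure_le {Y' : Type} [Fintype Y'] (hP : IsPmf P)
    (hK : ∀ z x, IsPmf (K z x)) (π : Θ → Y) (π' : Θ → Y') {c : ℝ}
    (hgap : ∀ z, ∀ q : X → ℝ, IsPmf q →
      shannon (output q fun x => prD (K z x) π') - ∑ x, q x * shannon (prD (K z x) π') ≤
        shannon (output q fun x => prD (K z x) π) - ∑ x, q x * shannon (prD (K z x) π) + c)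
    (f : S → Fin n → X) (g : S → Fin n → Z) :
    condMutInf (codedMeasure P K f g) (fun ω => f ω.1) (fun ω j => π' (ω.2 j))
        (fun ω => g ω.1) ≤
      condMutInf (codedMeasure P K f g) (fun ω => f ω.1) (fun ω j => π (ω.2 j))
        (fun ω => g ω.1) + n * c := by
  have hpmf := isPmf_codedMeasure hP hK f g
  have hsingle : ∀ z, EntropyGapLE (fun x => prD (K z x) π) (fun x => prD (K z x) π')
      fun x => c + shannon (prD (K z x) π') - shannon (prD (K z x) π) := by
    intro z
    refine EntropyGapLE.of_isPmf (fun x => ((hK z x).map π).2) (fun x => ((hK z x).map π').2) ?_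
    intro q hq
    have hc : ∑ x, q x * c = c := by rw [← Finset.sum_mul, hq.2, one_mul]
    simp only [mul_add, mul_sub, Finset.sum_add_distrib, Finset.sum_sub_distrib, hc]
    linarith [hgap z q hq]
  have hblock : ∀ z : Fin n → Z,
      EntropyGapLE (fun (x : Fin n → X) (y : Fin n → Y) => ∏ j, prD (K (z j) (x j)) π (y j))
        (fun x (y : Fin n → Y') => ∏ j, prD (K (z j) (x j)) π' (y j)) fun x =>
          n * c + shannon (fun y : Fin n → Y' => ∏ j, prD (K (z j) (x j)) π' (y j)) -
            shannon (fun y : Fin n → Y => ∏ j, prD (K (z j) (x j)) π (y j)) := by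
    intro z
    have hpi := EntropyGapLE.pi (fun j => hsingle (z j)) (fun j x => (hK (z j) x).map π)
      fun j x => (hK (z j) x).map π'
    have hd : ∀ x : Fin n → X,
        n * c + shannon (fun y : Fin n → Y' => ∏ j, prD (K (z j) (x j)) π' (y j)) -
            shannon (fun y : Fin n → Y => ∏ j, prD (K (z j) (x j)) π (y j)) =
          ∑ j, (c + shannon (prD (K (z j) (x j)) π') - shannon (prD (K (z j) (x j)) π)) := by
      intro x
      rw [shannon_pi n (fun j => prD (K (z j) (x j)) π) fun j => ((hK (z j) (x j)).map π).2,
        shannon_pi n (fun j => prD (K (z j) (x j)) π') fun j => ((hK (z j) (x j)).map π').2]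
      simp [Finset.sum_add_distrib, Finset.sum_sub_distrib]
    simpa only [hd] using hpi
  exact condMutInf_le_add_of_entropyGapLE hpmf (fun ω => f ω.1) (fun ω j => π (ω.2 j))
    (fun ω j => π' (ω.2 j)) (fun ω => g ω.1)
    (fun z x => sum_prod_apply n (fun j => prD (K (z j) (x j)) π)
      fun j => ((hK (z j) (x j)).map π).2)
    (fun z x => sum_prod_apply n (fun j => prD (K (z j) (x j)) π')
      fun j => ((hK (z j) (x j)).map π').2)
    (prD_codedMeasure_output hK f g π) (prD_codedMeasure_output hK f g π') hblock

end Channel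

section Interference

variable {S1 S2 W1 W2 X1 X2 Y1 Y2 Y : Type} [Fintype S1] [Fintype S2] [Fintype W1] [Fintype W2]
  [Fintype X1] [Fintype X2] [Fintype Y1] [Fintype Y2]

lemma sciMeasure_const (pS : S1 × S2 × W1 × W2 → ℝ) (q1 : X1 → ℝ) (q2 : X2 → ℝ)
    (chan : X1 → X2 → Y1 × Y2 → ℝ) :
    sciMeasure pS (fun _ => q1) (fun _ => q2) chan =
      fun w => pS w.1 * (q1 w.2.1 * q2 w.2.2.1 * chan w.2.1 w.2.2.1 w.2.2.2) := by
  ext w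
  simp only [sciMeasure]
  ring

lemma prD_sciMeasure_const {pS : S1 × S2 × W1 × W2 → ℝ} (hpS : IsPmf pS) (q1 : X1 → ℝ)
    (q2 : X2 → ℝ) (chan : X1 → X2 → Y1 × Y2 → ℝ) :
    prD (sciMeasure pS (fun _ => q1) (fun _ => q2) chan) Prod.snd =
      fun w => q1 w.1 * q2 w.2.1 * chan w.1 w.2.1 w.2.2 := by
  ext w
  simp only [prD, sciMeasure_const]
  rw [Fintype.sum_prod_type_right, Finset.sum_eq_single w]
  · simp only [if_true, ← Finset.sum_mul, hpS.2, one_mul]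
  · intro w' _ hw
    simp [hw]
  · simp

lemma prD_sciMeasure_output [Fintype Y] {pS : S1 × S2 × W1 × W2 → ℝ} (hpS : IsPmf pS) (q1 : X1 → ℝ)
    (q2 : X2 → ℝ) (chan : X1 → X2 → Y1 × Y2 → ℝ) (π : Y1 × Y2 → Y) (x1 : X1) (y : Y) (x2 : X2) :
    prD (sciMeasure pS (fun _ => q1) (fun _ => q2) chan)
        (fun w => (w.2.1, π w.2.2.2, w.2.2.1)) (x1, y, x2) =
      q1 x1 * q2 x2 * prD (chan x1 x2) π y := by
  rw [← prD_map _ Prod.snd fun v : X1 × X2 × (Y1 × Y2) => (v.1, π v.2.2, v.2.1),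
    prD_sciMeasure_const hpS]
  simp only [prD]
  rw [Fintype.sum_prod_type, Finset.sum_eq_single x1, Fintype.sum_prod_type,
    Finset.sum_eq_single x2, Finset.mul_sum]
  · refine Finset.sum_congr rfl fun t _ => ?_
    simp
  · intro x _ hx
    simp [hx]
  · simp
  · intro x _ hx
    simp [hx]
  · simp

lemma isPmf_pointMass (x : X1) : IsPmf fun x' => if x' = x then (1 : ℝ) else 0 :=
  ⟨fun x' => by dsimp only; split_ifs <;> simp, by simp⟩

lemma condMutInf_sciMeasure_fst [Fintype Y] {pS : S1 × S2 × W1 × W2 → ℝ} (hpS : IsPmf pS)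
    (q : X1 → ℝ) (x2 : X2) {chan : X1 → X2 → Y1 × Y2 → ℝ} (hchan : ∀ x1 x2, IsPmf (chan x1 x2))
    (π : Y1 × Y2 → Y) :
    condMutInf (sciMeasure pS (fun _ => q) (fun _ x => if x = x2 then 1 else 0) chan)
        (fun w => w.2.1) (fun w => π w.2.2.2) (fun w => w.2.2.1) =
      shannon (output q fun x1 => prD (chan x1 x2) π) -
          ∑ x1, q x1 * shannon (prD (chan x1 x2) π) -
        ent (sciMeasure pS (fun _ => q) (fun _ x => if x = x2 then 1 else 0) chan)
          (fun w => w.2.2.1) :=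
  condMutInf_of_law_const _ _ _ _ q (fun x2 x1 => prD (chan x1 x2) π) x2
    (fun _ _ => ((hchan _ _).map π).2)
    fun x1 y x => prD_sciMeasure_output hpS q (fun x => if x = x2 then 1 else 0) chan π x1 y x

lemma condMutInf_sciMeasure_snd [Fintype Y] {pS : S1 × S2 × W1 × W2 → ℝ} (hpS : IsPmf pS)
    (q : X2 → ℝ) (x1 : X1) {chan : X1 → X2 → Y1 × Y2 → ℝ} (hchan : ∀ x1 x2, IsPmf (chan x1 x2))
    (π : Y1 × Y2 → Y) :
    condMutInf (sciMeasure pS (fun _ x => if x = x1 then 1 else 0) (fun _ => q) chan)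
        (fun w => w.2.2.1) (fun w => π w.2.2.2) (fun w => w.2.1) =
      shannon (output q fun x2 => prD (chan x1 x2) π) -
          ∑ x2, q x2 * shannon (prD (chan x1 x2) π) -
        ent (sciMeasure pS (fun _ x => if x = x1 then 1 else 0) (fun _ => q) chan)
          (fun w => w.2.1) := by
  refine condMutInf_of_law_const _ _ _ _ q (fun x1 x2 => prD (chan x1 x2) π) x1
    (fun _ _ => ((hchan _ _).map π).2) fun x2 y x => ?_
  rw [mul_comm (q x2), ← prD_sciMeasure_output hpS (fun x => if x = x1 then 1 else 0) q chan π]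
  refine prD_congr _ fun w => ?_
  simp only [Prod.mk.injEq]
  tauto

lemma icBlockMeasure_eq_codedMeasure (pS : S1 × S2 × W1 × W2 → ℝ)
    (chan : X1 → X2 → Y1 × Y2 → ℝ) (m n : ℕ) (f1 : (Fin m → S1) → Fin n → X1)
    (f2 : (Fin m → S2) → Fin n → X2) :
    icBlockMeasure pS chan m n f1 f2 =
      codedMeasure (fun s : Fin m → S1 × S2 × W1 × W2 => ∏ i, pS (s i)) chan
        (fun s => f2 fun i => (s i).2.1) (fun s => f1 fun i => (s i).1) :=
  rfl

lemma mutInf_icBlockMeasure {A B : Type} [Fintype A] [Fintype B]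
    {pS : S1 × S2 × W1 × W2 → ℝ} (hpS : IsPmf pS) {chan : X1 → X2 → Y1 × Y2 → ℝ}
    (hchan : ∀ x1 x2, IsPmf (chan x1 x2)) (m n : ℕ) (f1 : (Fin m → S1) → Fin n → X1)
    (f2 : (Fin m → S2) → Fin n → X2) (U : S1 × S2 × W1 × W2 → A) (T : S1 × S2 × W1 × W2 → B) :
    mutInf (icBlockMeasure pS chan m n f1 f2) (fun ω i => U (ω.1 i)) (fun ω i => T (ω.1 i)) =
      m * mutInf pS U T := by
  rw [icBlockMeasure_eq_codedMeasure, ← mutInf_pi m hpS U T]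
  exact mutInf_codedMeasure (P := fun s : Fin m → S1 × S2 × W1 × W2 => ∏ i, pS (s i)) hchan
    (fun s => f2 fun i => (s i).2.1) (fun s => f1 fun i => (s i).1)
    (fun s i => U (s i)) (fun s i => T (s i))

end Interference

/-- If the i.i.d. source/side-information process satisfies that
`(S1, W2)` is independent of `(S2, W1)`, and the strong source-channel interference
conditions hold for rate `b`, i.e. for every single-letter distribution of the form
`p(w1,w2,s1,s2)p(x1|s1)p(x2|s2)`:
`b·I(X1;Y1|X2) ≤ b·I(X1;Y2|X2) + I(S1;W2)` and
`b·I(X2;Y2|X1) ≤ b·I(X2;Y1|X1) + I(S2;W1)`,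
then for all block lengths `m, n` with `n/m = b` and all deterministic encoders
`X1^n = f1(S1^m)`, `X2^n = f2(S2^m)`:
`I(X2^n;Y2^n|X1^n) ≤ I(X2^n;Y1^n|X1^n) + I(S2^m;W1^m)` and
`I(X1^n;Y1^n|X2^n) ≤ I(X1^n;Y2^n|X2^n) + I(S1^m;W2^m)`. -/
theorem strong_source_channel_interference_block
    {S1 S2 W1 W2 X1 X2 Y1 Y2 : Type}
    [Fintype S1] [Fintype S2] [Fintype W1] [Fintype W2]
    [Fintype X1] [Fintype X2] [Fintype Y1] [Fintype Y2]
    (pS : S1 × S2 × W1 × W2 → ℝ) (hpS : IsPmf pS)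
    (hInd : ∀ (a : S1 × W2) (c : S2 × W1),
      prD pS (fun r => ((r.1, r.2.2.2), (r.2.1, r.2.2.1))) (a, c) =
        prD pS (fun r => (r.1, r.2.2.2)) a * prD pS (fun r => (r.2.1, r.2.2.1)) c)
    (chan : X1 → X2 → Y1 × Y2 → ℝ) (hchan : ∀ x1 x2, IsPmf (chan x1 x2))
    (b : ℝ)
    (hSCI : ∀ (k1 : S1 → X1 → ℝ) (k2 : S2 → X2 → ℝ),
      (∀ s1, IsPmf (k1 s1)) → (∀ s2, IsPmf (k2 s2)) →
      (b * condMutInf (sciMeasure pS k1 k2 chan)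
          (fun z => z.2.1) (fun z => z.2.2.2.1) (fun z => z.2.2.1) ≤
        b * condMutInf (sciMeasure pS k1 k2 chan)
          (fun z => z.2.1) (fun z => z.2.2.2.2) (fun z => z.2.2.1) +
        mutInf pS (fun r => r.1) (fun r => r.2.2.2)) ∧
      (b * condMutInf (sciMeasure pS k1 k2 chan)
          (fun z => z.2.2.1) (fun z => z.2.2.2.2) (fun z => z.2.1) ≤
        b * condMutInf (sciMeasure pS k1 k2 chan)
          (fun z => z.2.2.1) (fun z => z.2.2.2.1) (fun z => z.2.1) +
        mutInf pS (fun r => r.2.1) (fun r => r.2.2.1))) :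
    ∀ (m n : ℕ), 0 < m → 0 < n → (n : ℝ) = b * m →
    ∀ (f1 : (Fin m → S1) → Fin n → X1) (f2 : (Fin m → S2) → Fin n → X2),
      (condMutInf (icBlockMeasure pS chan m n f1 f2)
          (fun ω => f2 (fun i => (ω.1 i).2.1)) (fun ω => fun j => (ω.2 j).2)
          (fun ω => f1 (fun i => (ω.1 i).1)) ≤
        condMutInf (icBlockMeasure pS chan m n f1 f2)
          (fun ω => f2 (fun i => (ω.1 i).2.1)) (fun ω => fun j => (ω.2 j).1)
          (fun ω => f1 (fun i => (ω.1 i).1)) +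
        mutInf (icBlockMeasure pS chan m n f1 f2)
          (fun ω => fun i => (ω.1 i).2.1) (fun ω => fun i => (ω.1 i).2.2.1)) ∧
      (condMutInf (icBlockMeasure pS chan m n f1 f2)
          (fun ω => f1 (fun i => (ω.1 i).1)) (fun ω => fun j => (ω.2 j).1)
          (fun ω => f2 (fun i => (ω.1 i).2.1)) ≤
        condMutInf (icBlockMeasure pS chan m n f1 f2)
          (fun ω => f1 (fun i => (ω.1 i).1)) (fun ω => fun j => (ω.2 j).2)
          (fun ω => f2 (fun i => (ω.1 i).2.1)) +
        mutInf (icBlockMeasure pS chan m n f1 f2)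
          (fun ω => fun i => (ω.1 i).1) (fun ω => fun i => (ω.1 i).2.2.2)) := by
  intro m n hm hn hnm f1 f2
  have hb : 0 < b := by
    have hm' : (0 : ℝ) < m := by exact_mod_cast hm
    have hn' : (0 : ℝ) < n := by exact_mod_cast hn
    exact pos_of_mul_pos_left (hnm ▸ hn') hm'.le
  have hnc : ∀ I : ℝ, n * (I / b) = m * I := by
    intro I
    rw [hnm]
    field_simp
  have hP : IsPmf fun s : Fin m → S1 × S2 × W1 × W2 => ∏ i, pS (s i) :=
    IsPmf.pi fun _ => hpS
  constructor
  · rw [mutInf_icBlockMeasure hpS hchan m n f1 f2 (fun r => r.2.1) (fun r => r.2.2.1), ← hnc]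
    refine condMutInf_codedMeasure_le hP hchan Prod.fst Prod.snd (fun x1 q hq => ?_)
      (fun s => f2 fun i => (s i).2.1) (fun s => f1 fun i => (s i).1)
    have key := (hSCI (fun _ x => if x = x1 then 1 else 0) (fun _ => q)
      (fun _ => isPmf_pointMass x1) fun _ => hq).2
    rw [condMutInf_sciMeasure_snd hpS q x1 hchan Prod.fst,
      condMutInf_sciMeasure_snd hpS q x1 hchan Prod.snd] at key
    rw [← sub_le_iff_le_add', le_div_iff₀ hb]
    linarith
  · rw [mutInf_icBlockMeasure hpS hchan m n f1 f2 (fun r => r.1) (fun r => r.2.2.2), ← hnc]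
    refine condMutInf_codedMeasure_le (K := fun x2 x1 => chan x1 x2) hP (fun _ _ => hchan _ _)
      Prod.snd Prod.fst (fun x2 q hq => ?_)
      (fun s => f1 fun i => (s i).1) (fun s => f2 fun i => (s i).2.1)
    have key := (hSCI (fun _ => q) (fun _ x => if x = x2 then 1 else 0)
      (fun _ => hq) fun _ => isPmf_pointMass x2).1
    rw [condMutInf_sciMeasure_fst hpS q x2 hchan Prod.fst,
      condMutInf_sciMeasure_fst hpS q x2 hchan Prod.snd] at key
    rw [← sub_le_iff_le_add', le_div_iff₀ hb]
    linarith
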